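/- arXiv:1407.1531 — 5 statements merged into one kernel-verified Lean document; each statement's English description precedes it below -/
import Mathlib

section
/- Let m ≥ 1 and let A, B be continuous linear endomorphisms of Euclidean space ℝ^m. Then for every v ∈ ℝ^m, ‖A v‖ + ‖B v‖ − 2‖v‖ ≤ (1/2)·‖A* ∘ A + B* ∘ B − 2·I‖·‖v‖, where A* denotes the Hilbert-space adjoint of A, I is the identity map, and the norm on operators is the operator norm. -/
/-- The crucial estimate (Lemma `biestim`):
`‖Av‖ + ‖Bv‖ - 2‖v‖ ≤ (1/2)‖A*∘A + B*∘B - 2I‖ ‖v‖`. -/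
theorem norm_apply_sum_le_half_opNorm_adjoint_comp
    (m : ℕ) (hm : 1 ≤ m)
    (A B : EuclideanSpace ℝ (Fin m) →L[ℝ] EuclideanSpace ℝ (Fin m))
    (v : EuclideanSpace ℝ (Fin m)) :
    ‖A v‖ + ‖B v‖ - 2 * ‖v‖ ≤
      (1 / 2) *
        ‖ContinuousLinearMap.adjoint A ∘L A + ContinuousLinearMap.adjoint B ∘L B -
          (2 : ℝ) • (1 : EuclideanSpace ℝ (Fin m) →L[ℝ] EuclideanSpace ℝ (Fin m))‖ * ‖v‖ := by
  set M := ContinuousLinearMap.adjoint A ∘L A + ContinuousLinearMap.adjoint B ∘L B -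
          (2 : ℝ) • (1 : EuclideanSpace ℝ (Fin m) →L[ℝ] EuclideanSpace ℝ (Fin m)) with hM
  have h1 : inner ℝ (M v) v = ‖A v‖ ^ 2 + ‖B v‖ ^ 2 - 2 * ‖v‖ ^ 2 := by
    have e : M v = ContinuousLinearMap.adjoint A (A v) + ContinuousLinearMap.adjoint B (B v)
        - (2 : ℝ) • v := by
      simp [hM]
    rw [e, inner_sub_left, inner_add_left, ContinuousLinearMap.adjoint_inner_left,
      ContinuousLinearMap.adjoint_inner_left, real_inner_smul_left,
      real_inner_self_eq_norm_sq, real_inner_self_eq_norm_sq, real_inner_self_eq_norm_sq]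
  have h2 : inner ℝ (M v) v ≤ ‖M‖ * ‖v‖ * ‖v‖ :=
    (real_inner_le_norm _ _).trans
      (mul_le_mul_of_nonneg_right (M.le_opNorm v) (norm_nonneg v))
  rcases eq_or_ne v 0 with rfl | hv
  · simp
  · have hn : 0 < ‖v‖ := norm_pos_iff.mpr hv
    refine le_of_mul_le_mul_right ?_ hn
    nlinarith [sq_nonneg (‖A v‖ - ‖v‖), sq_nonneg (‖B v‖ - ‖v‖)]
end

section
/- Let p > 1 and let a, b⁺, b⁻ ∈ ℝ with b⁺ ≠ b⁻. Then there exists θ ∈ (0,1) such that, writing w⁺ = (1−θ)·(b⁻ − a) + θ·(b⁺ − a) and w⁻ = (1−θ)·(b⁺ − a) + θ·(b⁻ − a), one has (|w⁺| − |b⁺ − a|)·|w⁺|^{p−1} + (|w⁻| − |b⁻ − a|)·|w⁻|^{p−1} < 0. -/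
lemma fidelity_aux (q x y : ℝ) (hq : 0 < q) (hne : x ≠ y) (h : |y| ≤ |x|) :
    (|(1 - 3/4) * y + 3/4 * x| - |x|) * |(1 - 3/4) * y + 3/4 * x| ^ q +
      (|(1 - 3/4) * x + 3/4 * y| - |y|) * |(1 - 3/4) * x + 3/4 * y| ^ q < 0 := by
  have hU : |(1 - 3/4) * y + 3/4 * x| < |x| := by
    rcases abs_cases ((1 - 3/4) * y + 3/4 * x) with h1 | h1 <;>
    rcases abs_cases x with h2 | h2 <;> rcases abs_cases y with h3 | h3 <;>
    rcases lt_or_gt_of_ne hne with h4 | h4 <;> linarith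
  have hU0 : 0 < |(1 - 3/4) * y + 3/4 * x| := by
    rw [abs_pos]
    intro h0
    apply hne
    rcases abs_cases x with h2 | h2 <;> rcases abs_cases y with h3 | h3 <;> linarith
  by_cases hV : |(1 - 3/4) * x + 3/4 * y| ≤ |y|
  · have h1 := mul_neg_of_neg_of_pos (sub_neg.2 hU) (Real.rpow_pos_of_pos hU0 q)
    have h2 := mul_nonpos_of_nonpos_of_nonneg (sub_nonpos.2 hV)
      (Real.rpow_nonneg (abs_nonneg ((1 - 3/4) * x + 3/4 * y)) q)
    linarith
  · push Not at hV
    have hUV : |(1 - 3/4) * x + 3/4 * y| < |(1 - 3/4) * y + 3/4 * x| := by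
      rcases abs_cases ((1 - 3/4) * y + 3/4 * x) with h1 | h1 <;>
      rcases abs_cases ((1 - 3/4) * x + 3/4 * y) with h5 | h5 <;>
      rcases abs_cases x with h2 | h2 <;> rcases abs_cases y with h3 | h3 <;>
      rcases lt_or_gt_of_ne hne with h4 | h4 <;> linarith
    have hS : |(1 - 3/4) * x + 3/4 * y| + |(1 - 3/4) * y + 3/4 * x| ≤ |x| + |y| := by
      rcases abs_cases ((1 - 3/4) * y + 3/4 * x) with h1 | h1 <;>
      rcases abs_cases ((1 - 3/4) * x + 3/4 * y) with h5 | h5 <;>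
      rcases abs_cases x with h2 | h2 <;> rcases abs_cases y with h3 | h3 <;> linarith
    have hp := Real.rpow_lt_rpow (abs_nonneg _) hUV hq
    have h1 := mul_lt_mul_of_pos_left hp (sub_pos.2 hV)
    have h2 := mul_nonneg (sub_nonneg.2 hS) (Real.rpow_pos_of_pos hU0 q).le
    linarith


/-- The key real-variable estimate behind the strict fidelity decrease for
`p`-increasing fidelities with `p > 1` (Lemma `phi-const-approx`). -/
theorem fidelity_strict_decrease (p a bp bm : ℝ) (hp : 1 < p) (hne : bp ≠ bm) :
    ∃ θ ∈ Set.Ioo (0 : ℝ) 1,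
      (|(1 - θ) * (bm - a) + θ * (bp - a)| - |bp - a|) *
          |(1 - θ) * (bm - a) + θ * (bp - a)| ^ (p - 1) +
        (|(1 - θ) * (bp - a) + θ * (bm - a)| - |bm - a|) *
          |(1 - θ) * (bp - a) + θ * (bm - a)| ^ (p - 1) < 0 := by
  refine ⟨3/4, ⟨by norm_num, by norm_num⟩, ?_⟩
  have hxy : bp - a ≠ bm - a := fun h => hne (by linarith)
  rcases le_total |bm - a| |bp - a| with h | h
  · exact fidelity_aux (p - 1) _ _ (by linarith) hxy h
  · rw [add_comm]
    exact fidelity_aux (p - 1) _ _ (by linarith) hxy.symm h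
end

section
/- Let n ≥ 1 and let p, q ∈ ℝⁿ (with the Euclidean inner product and norm) and ρ ∈ ℝ. Then ρ·⟨p, q⟩/√(1+‖p‖²) ≤ √(1+‖p+ρq‖²) − √(1+‖p‖²) ≤ ρ·⟨p, q⟩/√(1+‖p‖²) + ρ²·‖q‖²/√(1+‖p‖²). -/
open scoped RealInnerProductSpace

/-- The convexity/concavity sandwich for the area integrand `p ↦ √(1 + ‖p‖²)`:
`ρ⟨p,q⟩/√(1+‖p‖²) ≤ √(1+‖p+ρq‖²) − √(1+‖p‖²) ≤ ρ⟨p,q⟩/√(1+‖p‖²) + ρ²‖q‖²/√(1+‖p‖²)`. -/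
theorem sqrt_one_add_sq_sandwich (n : ℕ) (hn : 1 ≤ n)
    (p q : EuclideanSpace ℝ (Fin n)) (ρ : ℝ) :
    ρ * ⟪p, q⟫ / Real.sqrt (1 + ‖p‖ ^ 2) ≤
        Real.sqrt (1 + ‖p + ρ • q‖ ^ 2) - Real.sqrt (1 + ‖p‖ ^ 2) ∧
      Real.sqrt (1 + ‖p + ρ • q‖ ^ 2) - Real.sqrt (1 + ‖p‖ ^ 2) ≤
        ρ * ⟪p, q⟫ / Real.sqrt (1 + ‖p‖ ^ 2) +
          ρ ^ 2 * ‖q‖ ^ 2 / Real.sqrt (1 + ‖p‖ ^ 2) := by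
  have hexp : ‖p + ρ • q‖ ^ 2 = ‖p‖ ^ 2 + 2 * (ρ * ⟪p, q⟫) + ρ ^ 2 * ‖q‖ ^ 2 := by
    rw [norm_add_sq_real, real_inner_smul_right, norm_smul, mul_pow, Real.norm_eq_abs, sq_abs]
  have hcs : ⟪p, q⟫ ^ 2 ≤ ‖p‖ ^ 2 * ‖q‖ ^ 2 := by
    rw [← mul_pow, ← sq_abs]
    exact pow_le_pow_left₀ (abs_nonneg _) (abs_real_inner_le_norm p q) 2
  have hA : 0 < Real.sqrt (1 + ‖p‖ ^ 2) := Real.sqrt_pos.mpr (by positivity)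
  have hA2 : Real.sqrt (1 + ‖p‖ ^ 2) ^ 2 = 1 + ‖p‖ ^ 2 := Real.sq_sqrt (by positivity)
  have hB : 0 ≤ Real.sqrt (1 + ‖p + ρ • q‖ ^ 2) := Real.sqrt_nonneg _
  have hB2 : Real.sqrt (1 + ‖p + ρ • q‖ ^ 2) ^ 2 = 1 + ‖p + ρ • q‖ ^ 2 :=
    Real.sq_sqrt (by positivity)
  set A := Real.sqrt (1 + ‖p‖ ^ 2)
  set B := Real.sqrt (1 + ‖p + ρ • q‖ ^ 2)
  have hr : 0 ≤ ρ ^ 2 * ‖q‖ ^ 2 := by positivity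
  have ht : (ρ * ⟪p, q⟫) ^ 2 ≤ ‖p‖ ^ 2 * (ρ ^ 2 * ‖q‖ ^ 2) := by
    nlinarith [mul_le_mul_of_nonneg_left hcs (sq_nonneg ρ)]
  generalize ρ * ⟪p, q⟫ = t at *
  generalize ρ ^ 2 * ‖q‖ ^ 2 = r at *
  have hBA : B ^ 2 = A ^ 2 + 2 * t + r := by linarith
  have htA : t ^ 2 ≤ A ^ 2 * r := by rw [hA2]; linarith
  constructor
  · rw [div_le_iff₀ hA]
    have : t + A ^ 2 ≤ A * B := by
      apply le_of_abs_le
      apply abs_le_of_sq_le_sq _ (by positivity)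
      rw [mul_pow, hBA]
      linarith
    linarith
  · rw [← add_div, le_div_iff₀ hA]
    nlinarith [sq_nonneg (A - B)]
end

section
/- Let Ω ⊆ ℝ^m be open and let γ : Ω → Ω be a bijection such that both γ and its inverse γ⁻¹ are Lipschitz and both map Lebesgue-null sets to Lebesgue-null sets. Then for Lebesgue-almost every x ∈ Ω: γ is differentiable at x, γ⁻¹ is differentiable at γ(x), the derivative Dγ(x) is an invertible linear map, and D(γ⁻¹)(γ(x)) = (Dγ(x))⁻¹, i.e. D(γ⁻¹)(γ(x)) ∘ Dγ(x) and Dγ(x) ∘ D(γ⁻¹)(γ(x)) are both the identity on ℝ^m. -/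
open MeasureTheory

/-- The almost-everywhere inverse function theorem for bi-Lipschitz transformations
with the Lusin `N`-property: for a.e. `x ∈ Ω`, both `γ` and its inverse `δ` are
differentiable (at `x` resp. `γ x`), and the derivatives are mutually inverse. -/
theorem ae_inverse_function_theorem
    (m : ℕ) (Ω : Set (EuclideanSpace ℝ (Fin m))) (hΩ : IsOpen Ω)
    (γ δ : EuclideanSpace ℝ (Fin m) → EuclideanSpace ℝ (Fin m))
    (hγΩ : Set.MapsTo γ Ω Ω) (hδΩ : Set.MapsTo δ Ω Ω)
    (hinv₁ : ∀ x ∈ Ω, δ (γ x) = x) (hinv₂ : ∀ x ∈ Ω, γ (δ x) = x)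
    (Kγ Kδ : NNReal) (hγlip : LipschitzOnWith Kγ γ Ω) (hδlip : LipschitzOnWith Kδ δ Ω)
    (hγN : ∀ s ⊆ Ω, volume s = 0 → volume (γ '' s) = 0)
    (hδN : ∀ s ⊆ Ω, volume s = 0 → volume (δ '' s) = 0) :
    ∀ᵐ x ∂volume, x ∈ Ω →
      ∃ A B : EuclideanSpace ℝ (Fin m) →L[ℝ] EuclideanSpace ℝ (Fin m),
        HasFDerivAt γ A x ∧ HasFDerivAt δ B (γ x) ∧
        B ∘L A = 1 ∧ A ∘L B = 1 := by
  have h1 := hγlip.ae_differentiableWithinAt_of_mem (μ := volume)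
  have h2 := hδlip.ae_differentiableWithinAt_of_mem (μ := volume)
  have hN : volume (δ '' {y | y ∈ Ω ∧ ¬ DifferentiableWithinAt ℝ δ Ω y}) = 0 := by
    refine hδN _ (fun y hy => hy.1) ?_
    have h3 := ae_iff.1 h2
    simpa only [Classical.not_imp] using h3
  have h4 := measure_eq_zero_iff_ae_notMem.1 hN
  filter_upwards [h1, h4] with x hx1 hx2 hx
  have hγx := hγΩ hx
  have dγ : DifferentiableAt ℝ γ x := (hx1 hx).differentiableAt (hΩ.mem_nhds hx)
  have dδ' : DifferentiableWithinAt ℝ δ Ω (γ x) := by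
    by_contra hc
    exact hx2 ⟨γ x, ⟨hγx, hc⟩, hinv₁ x hx⟩
  have dδ : DifferentiableAt ℝ δ (γ x) := dδ'.differentiableAt (hΩ.mem_nhds hγx)
  refine ⟨fderiv ℝ γ x, fderiv ℝ δ (γ x), dγ.hasFDerivAt, dδ.hasFDerivAt, ?_, ?_⟩
  · have hc := dδ.hasFDerivAt.comp x dγ.hasFDerivAt
    refine hc.unique ((hasFDerivAt_id x).congr_of_eventuallyEq ?_)
    filter_upwards [hΩ.mem_nhds hx] with z hz using hinv₁ z hz
  · have dγ' : HasFDerivAt γ (fderiv ℝ γ x) (δ (γ x)) := by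
      rw [hinv₁ x hx]; exact dγ.hasFDerivAt
    have hc := dγ'.comp (γ x) dδ.hasFDerivAt
    refine hc.unique ((hasFDerivAt_id (γ x)).congr_of_eventuallyEq ?_)
    filter_upwards [hΩ.mem_nhds hγx] with z hz using hinv₂ z hz
end

section
/- Let ψ : ℝ → ℝ be concave and monotone nondecreasing on [0,∞) with ψ(0) = 0, and suppose ψ(t)/t → L as t → 0⁺ with L ∈ ℝ. Then for every m ≥ 1, all linear maps A, B : ℝ^m → ℝ^m, all scalars c, d ≥ 0 with c + d = 2, and every v ∈ ℝ^m (Euclidean norm): c·ψ(‖A v‖) + d·ψ(‖B v‖) − 2·ψ(‖v‖) ≤ L·max(0, ‖c·A v‖ + ‖d·B v‖ − 2‖v‖). -/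
/-- A concave function vanishing at the origin lies above its chords from `0`. -/
theorem chord_le_aux (ψ : ℝ → ℝ) (hconc : ConcaveOn ℝ (Set.Ici 0) ψ) (hψ0 : ψ 0 = 0)
    (t h : ℝ) (ht : 0 ≤ t) (hh : 0 < h) (hth : t ≤ h) : t / h * ψ h ≤ ψ t := by
  have h1 : t / h ≤ 1 := (div_le_one hh).2 hth
  have := hconc.2 (Set.mem_Ici.2 hh.le) (Set.mem_Ici.2 (le_refl (0 : ℝ)))
    (show 0 ≤ t / h by positivity) (show 0 ≤ 1 - t / h by linarith) (by ring)
  simp only [smul_eq_mul, hψ0, mul_zero, add_zero] at this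
  rwa [div_mul_cancel₀ t hh.ne'] at this


/-- The double-Lipschitz comparison estimate for non-convex total variation
energies `TV_ψ` with concave `ψ` (Remark on non-convex total variation). -/
theorem nonconvex_tv_double_lipschitz_estimate (ψ : ℝ → ℝ) (L : ℝ)
    (hconc : ConcaveOn ℝ (Set.Ici 0) ψ)
    (hmono : MonotoneOn ψ (Set.Ici 0))
    (hψ0 : ψ 0 = 0)
    (hL : Filter.Tendsto (fun t => ψ t / t) (nhdsWithin 0 (Set.Ioi 0)) (nhds L)) :
    ∀ m : ℕ, 1 ≤ m →
      ∀ (A B : EuclideanSpace ℝ (Fin m) →L[ℝ] EuclideanSpace ℝ (Fin m))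
        (c d : ℝ), 0 ≤ c → 0 ≤ d → c + d = 2 →
        ∀ v : EuclideanSpace ℝ (Fin m),
          c * ψ ‖A v‖ + d * ψ ‖B v‖ - 2 * ψ ‖v‖ ≤
            L * max 0 (‖c • A v‖ + ‖d • B v‖ - 2 * ‖v‖) := by
  intro m _ A B c d hc hd hcd v
  have hlin : ∀ h : ℝ, 0 < h → ψ h ≤ L * h := by
    intro h hh
    have : ψ h / h ≤ L := by
      refine ge_of_tendsto hL ?_
      filter_upwards [Ioc_mem_nhdsGT hh] with t ht
      have := chord_le_aux ψ hconc hψ0 t h ht.1.le hh ht.2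
      rw [le_div_iff₀ ht.1]
      calc ψ h / h * t = t / h * ψ h := by ring
        _ ≤ _ := this
    exact (div_le_iff₀ hh).1 this
  rw [norm_smul, norm_smul, Real.norm_of_nonneg hc, Real.norm_of_nonneg hd]
  have ha := norm_nonneg (A v)
  have hb := norm_nonneg (B v)
  have hr := norm_nonneg v
  generalize ‖A v‖ = a at *
  generalize ‖B v‖ = b at *
  generalize ‖v‖ = r at *
  have hs0 : 0 ≤ c / 2 * a + d / 2 * b := by positivity
  have hJ := hconc.2 (Set.mem_Ici.2 ha) (Set.mem_Ici.2 hb)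
    (show 0 ≤ c / 2 by positivity) (show 0 ≤ d / 2 by positivity) (by linarith)
  simp only [smul_eq_mul] at hJ
  have hs : c * a + d * b - 2 * r = 2 * (c / 2 * a + d / 2 * b - r) := by ring
  rw [hs]
  generalize c / 2 * a + d / 2 * b = s at *
  rcases le_or_gt s r with h | h
  · rw [max_eq_left (by linarith)]
    have := hmono (Set.mem_Ici.2 hs0) (Set.mem_Ici.2 hr) h
    linarith
  · rw [max_eq_right (by linarith)]
    have hsp : 0 < s := by linarith
    have h1 := chord_le_aux ψ hconc hψ0 r s hr hsp h.le
    have h2 := chord_le_aux ψ hconc hψ0 (s - r) s (by linarith) hsp (by linarith)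
    have h3 : r / s * ψ s + (s - r) / s * ψ s = ψ s := by field_simp; ring
    have h4 := hlin (s - r) (by linarith)
    linarith
end
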